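/- arXiv:1509.07932 — 2 statements merged into one kernel-verified Lean document; each statement's English description precedes it below -/
import Mathlib

section
/- For every natural number n and all matrices A, B ∈ SLₙ(ℤ), there exists a matrix C ∈ SLₙ(ℤ) such that every entry of C is congruent modulo 8 to the corresponding entry of A, and congruent modulo 3 to the corresponding entry of B. -/
/-!
Put `H = {N mod 3 : N ∈ SLₙ(ℤ), N ≡ 1 mod 8}`, a subgroup of `SLₙ(𝔽₃)`. Since `𝔽₃` is a field,
`SLₙ(𝔽₃)` is generated by transvections: Gaussian elimination reduces to the matrices
`diag(a, a⁻¹)` in two coordinates, and these are products of six transvections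
(`diag2n_eq_prod_transvection`). A transvection with coefficient `a` belongs to `H`, because it
lifts to the integral transvection whose coefficient is `≡ 0 mod 8` and `≡ a mod 3`. Hence
`H = SLₙ(𝔽₃)`. For the theorem, choose `N ≡ 1 mod 8` with `N ≡ A⁻¹B mod 3` and take `C = A N`.
-/

open Matrix Matrix.SpecialLinearGroup

/-- Whitehead's identity: `diag(a, a⁻¹)`, placed at two coordinates `i ≠ j`, is a product of
transvections. -/
lemma diag2n_eq_prod_transvection {ι F : Type*} [Fintype ι] [DecidableEq ι] [Field F]
    {i j : ι} (hij : i ≠ j) (a : F) (ha : a ≠ 0) :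
    diag2n hij a ha = SpecialLinearGroup.transvection hij a *
      SpecialLinearGroup.transvection hij.symm (-a⁻¹) *
      SpecialLinearGroup.transvection hij a *
      SpecialLinearGroup.transvection hij (-1) *
      SpecialLinearGroup.transvection hij.symm 1 *
      SpecialLinearGroup.transvection hij (-1) := by
  apply Subtype.ext
  have hd : (diag2n hij a ha).1 = 1 + single i i (a - 1) + single j j (a⁻¹ - 1) := by
    rw [diag2n_coe]
    ext k l
    simp only [diagonal_apply, Matrix.add_apply, Matrix.one_apply, single_apply]
    grind
  rw [hd]
  simp only [coe_mul, transvection_coe, mul_add, add_mul, mul_one, one_mul,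
    single_mul_single_same, single_mul_single_of_ne _ _ _ _ hij,
    single_mul_single_of_ne _ _ _ _ hij.symm, add_zero]
  ext k l
  simp only [Matrix.add_apply, Matrix.one_apply, single_apply]
  grind

/-- The matrices in `SLₙ(𝔽₃)` that lift to an integral matrix of determinant one congruent to the
identity modulo `8`. -/
def liftable (n : ℕ) : Subgroup (SpecialLinearGroup (Fin n) (ZMod 3)) :=
  (SpecialLinearGroup.map (n := Fin n) (Int.castRingHom (ZMod 8))).ker.map
    (SpecialLinearGroup.map (Int.castRingHom (ZMod 3)))

lemma map_transvection {ι R S : Type*} [Fintype ι] [DecidableEq ι] [CommRing R] [CommRing S]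
    (f : R →+* S) {i j : ι} (hij : i ≠ j) (a : R) :
    SpecialLinearGroup.map f (SpecialLinearGroup.transvection hij a) =
      SpecialLinearGroup.transvection hij (f a) := by
  ext k l
  simp only [map_apply_coe, RingHom.mapMatrix_apply, transvection_coe, Matrix.map_apply,
    Matrix.add_apply, Matrix.one_apply, single_apply]
  split_ifs <;> simp

lemma transvection_mem_liftable {n : ℕ} {i j : Fin n} (hij : i ≠ j) (a : ZMod 3) :
    SpecialLinearGroup.transvection hij a ∈ liftable n := by
  -- `16` is `0` modulo `8` and `1` modulo `3`.
  refine ⟨SpecialLinearGroup.transvection hij (16 * (a.val : ℤ)), ?_, ?_⟩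
  · have h : Int.castRingHom (ZMod 8) (16 * (a.val : ℤ)) = 0 := by
      rw [map_mul, show Int.castRingHom (ZMod 8) 16 = 0 by decide, zero_mul]
    rw [SetLike.mem_coe, MonoidHom.mem_ker, map_transvection, h]
    exact Subtype.ext (by simp)
  · have h : Int.castRingHom (ZMod 3) (16 * (a.val : ℤ)) = a := by
      rw [map_mul, show Int.castRingHom (ZMod 3) 16 = 1 by decide, one_mul]
      simp
    rw [map_transvection, h]

/-- Generation of `SLₙ(𝔽₃)` by transvections shows that `liftable n` is everything; for `n ≤ 1` the
group is trivial. -/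
lemma mem_liftable {n : ℕ} (M : SpecialLinearGroup (Fin n) (ZMod 3)) : M ∈ liftable n := by
  have : Fact (Nat.Prime 3) := ⟨Nat.prime_three⟩
  rcases subsingleton_or_nontrivial (Fin n) with h | h
  · rw [Subsingleton.elim M 1]
    exact one_mem _
  · refine diagonal_transvection_induction' (· ∈ liftable n) M ?_
      (fun i j hij a ↦ transvection_mem_liftable hij a) (fun _ _ ↦ mul_mem)
    intro i j hij c hc
    have key := @transvection_mem_liftable n
    rw [diag2n_eq_prod_transvection hij c hc]
    exact mul_mem (mul_mem (mul_mem (mul_mem (mul_mem (key _ _) (key _ _)) (key _ _))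
      (key _ _)) (key _ _)) (key _ _)

lemma modEq_of_map_eq {n m : ℕ} {M N : SpecialLinearGroup (Fin n) ℤ}
    (h : SpecialLinearGroup.map (Int.castRingHom (ZMod m)) M =
      SpecialLinearGroup.map (Int.castRingHom (ZMod m)) N) (i j : Fin n) :
    M.1 i j ≡ N.1 i j [ZMOD m] := by
  rw [← ZMod.intCast_eq_intCast_iff]
  simpa using congrArg (fun X ↦ X.1 i j) h

/-- For any `A, B ∈ SLₙ(ℤ)` there is `C ∈ SLₙ(ℤ)` with `C ≡ A (mod 8)` and
`C ≡ B (mod 3)` entrywise. -/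
theorem SL_chinese_remainder (n : ℕ) (A B : Matrix.SpecialLinearGroup (Fin n) ℤ) :
    ∃ C : Matrix.SpecialLinearGroup (Fin n) ℤ,
      (∀ i j, (C : Matrix (Fin n) (Fin n) ℤ) i j ≡
          (A : Matrix (Fin n) (Fin n) ℤ) i j [ZMOD 8]) ∧
      (∀ i j, (C : Matrix (Fin n) (Fin n) ℤ) i j ≡
          (B : Matrix (Fin n) (Fin n) ℤ) i j [ZMOD 3]) := by
  obtain ⟨N, h8, h3⟩ := mem_liftable (SpecialLinearGroup.map (Int.castRingHom (ZMod 3)) (A⁻¹ * B))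
  refine ⟨A * N, modEq_of_map_eq (m := 8) ?_, modEq_of_map_eq (m := 3) ?_⟩
  · rw [map_mul, MonoidHom.mem_ker.1 h8, mul_one]
  · rw [map_mul, h3, ← map_mul, mul_inv_cancel_left]
end

section
/- Let n be a natural number and let U₁ and U₁' be n×n integer matrices, each of which is a (possibly empty) finite product of elementary transvection matrices I + a·E_{ij} with i ≠ j and a ∈ ℤ. Then there exists a matrix U ∈ SLₙ(ℤ) such that U is congruent entrywise modulo 8 to U₁ and congruent entrywise modulo 3 to U₁'. -/
/-!
Multiplying the coefficient of a transvection by an integer `k` leaves it unchanged modulo `m` when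
`k = 1` in `ZMod m`, and turns it into the identity when `k = 0` in `ZMod m`. Since
`9 ≡ 1 (mod 8)`, `9 ≡ 0 (mod 3)`, `16 ≡ 0 (mod 8)` and `16 ≡ 1 (mod 3)`, scale the transvections of
`U₁` by `9` and those of `U₁'` by `16`: the product of all of them has determinant `1`, reduces to
`U₁ * 1` modulo `8` and to `1 * U₁'` modulo `3`.
-/

open Matrix

/-- The transvection `I + (k * c)·E_{ij}` obtained from `I + c·E_{ij}`. -/
def scaleTransvection {n : ℕ} (k : ℤ) (t : TransvectionStruct (Fin n) ℤ) :
    TransvectionStruct (Fin n) ℤ :=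
  { t with c := k * t.c }

lemma map_scaleTransvection {n : ℕ} (m : ℕ) (k : ℤ) (t : TransvectionStruct (Fin n) ℤ) :
    (Int.castRingHom (ZMod m)).mapMatrix (scaleTransvection k t).toMatrix =
      transvection t.i t.j ((k : ZMod m) * (t.c : ZMod m)) := by
  ext a b
  simp [scaleTransvection, TransvectionStruct.toMatrix, transvection, Matrix.one_apply,
    Matrix.single_apply, apply_ite (Int.cast : ℤ → ZMod m)]

lemma map_prod_scale_of_eq_one {n : ℕ} {m : ℕ} {k : ℤ} (hk : (k : ZMod m) = 1)
    (L : List (TransvectionStruct (Fin n) ℤ)) :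
    (Int.castRingHom (ZMod m)).mapMatrix
        ((L.map (scaleTransvection k)).map TransvectionStruct.toMatrix).prod =
      (Int.castRingHom (ZMod m)).mapMatrix (L.map TransvectionStruct.toMatrix).prod := by
  have key (t : TransvectionStruct (Fin n) ℤ) :
      (Int.castRingHom (ZMod m)).mapMatrix (scaleTransvection k t).toMatrix =
        (Int.castRingHom (ZMod m)).mapMatrix t.toMatrix := by
    have h := map_scaleTransvection m 1 t
    rw [map_scaleTransvection, hk]
    simpa [scaleTransvection, TransvectionStruct.toMatrix] using h.symm
  induction L with
  | nil => rfl
  | cons t L ih => simp only [List.map_cons, List.prod_cons, map_mul, key, ih]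

lemma map_prod_scale_of_eq_zero {n : ℕ} {m : ℕ} {k : ℤ} (hk : (k : ZMod m) = 0)
    (L : List (TransvectionStruct (Fin n) ℤ)) :
    (Int.castRingHom (ZMod m)).mapMatrix
        ((L.map (scaleTransvection k)).map TransvectionStruct.toMatrix).prod = 1 := by
  induction L with
  | nil => simp
  | cons t L ih =>
    rw [List.map_cons, List.map_cons, List.prod_cons, map_mul, ih, map_scaleTransvection, hk,
      zero_mul, transvection_zero, one_mul]

lemma modEq_of_mapMatrix_eq {n m : ℕ} {A B : Matrix (Fin n) (Fin n) ℤ}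
    (h : (Int.castRingHom (ZMod m)).mapMatrix A = (Int.castRingHom (ZMod m)).mapMatrix B)
    (i j : Fin n) : A i j ≡ B i j [ZMOD m] :=
  (ZMod.intCast_eq_intCast_iff _ _ _).1 (congrFun (congrFun h i) j)


/-- If `U₁` and `U₁'` are finite products of elementary transvection matrices
`I + a·E_{ij}` (`i ≠ j`), then there is `U ∈ SLₙ(ℤ)` with `U ≡ U₁ (mod 8)` and
`U ≡ U₁' (mod 3)` entrywise. -/
theorem exists_SL_chinese_remainder_of_transvection_products (n : ℕ)
    (U₁ U₁' : Matrix (Fin n) (Fin n) ℤ)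
    (h1 : ∃ L : List (Matrix.TransvectionStruct (Fin n) ℤ),
      U₁ = (L.map Matrix.TransvectionStruct.toMatrix).prod)
    (h2 : ∃ L : List (Matrix.TransvectionStruct (Fin n) ℤ),
      U₁' = (L.map Matrix.TransvectionStruct.toMatrix).prod) :
    ∃ U : Matrix.SpecialLinearGroup (Fin n) ℤ,
      (∀ i j, (U : Matrix (Fin n) (Fin n) ℤ) i j ≡ U₁ i j [ZMOD 8]) ∧
      (∀ i j, (U : Matrix (Fin n) (Fin n) ℤ) i j ≡ U₁' i j [ZMOD 3]) := by
  obtain ⟨L, rfl⟩ := h1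
  obtain ⟨L', rfl⟩ := h2
  refine ⟨⟨((L.map (scaleTransvection 9)).map TransvectionStruct.toMatrix).prod *
    ((L'.map (scaleTransvection 16)).map TransvectionStruct.toMatrix).prod, ?_⟩,
    modEq_of_mapMatrix_eq (m := 8) ?_, modEq_of_mapMatrix_eq (m := 3) ?_⟩
  · rw [det_mul, TransvectionStruct.det_toMatrix_prod, TransvectionStruct.det_toMatrix_prod,
      one_mul]
  · rw [map_mul, map_prod_scale_of_eq_one (by decide), map_prod_scale_of_eq_zero (by decide),
      mul_one]
  · rw [map_mul, map_prod_scale_of_eq_zero (by decide), map_prod_scale_of_eq_one (by decide),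
      one_mul]
end
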